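/- Moment transfer identity (equation (formest)). Let (l_{i1},l_{i2},l_{i3}), i = 1,…,I, be triples of positive integers with l_{i1} ≤ l_{i2} ≤ l_{i3} and l_{i1}+l_{i2}+l_{i3} even, and let p₁,…,p_I be positive integers. Then E[ ∏_{i=1}^{I} Î_{l_{i1}l_{i2}l_{i3}}^{2p_i} ] = E[ ∏_{i=1}^{I} I_{l_{i1}l_{i2}l_{i3}}^{2p_i} ] · G[(l_{11},l_{12},l_{13}),…,(l_{I1},l_{I2},l_{I3}); p₁,…,p_I]. -/

import Mathlib

open MeasureTheory ProbabilityTheory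

noncomputable section


/-- Factorial of an integer (the factorial of its nonnegative part). -/
def zfact (z : ℤ) : ℕ := Nat.factorial z.toNat

/-- The range `-l, ..., l` of projection quantum numbers for multipole `l`. -/
def mrange (l : ℕ) : Finset ℤ := Finset.Icc (-(l : ℤ)) l

/-- The Wigner 3j symbol, defined by the Racah factorial sum formula; it vanishes
unless `m₁ + m₂ + m₃ = 0`, `|mᵢ| ≤ lᵢ` and the triangle conditions hold. -/
def w3j (l₁ l₂ l₃ : ℕ) (m₁ m₂ m₃ : ℤ) : ℝ :=
  if m₁ + m₂ + m₃ = 0 ∧ m₁.natAbs ≤ l₁ ∧ m₂.natAbs ≤ l₂ ∧ m₃.natAbs ≤ l₃ ∧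
      l₃ ≤ l₁ + l₂ ∧ l₁ ≤ l₂ + l₃ ∧ l₂ ≤ l₁ + l₃ then
    (-1 : ℝ) ^ ((l₃ : ℤ) + m₃ + l₂ + m₂) *
    Real.sqrt (((zfact ((l₁ : ℤ) + l₂ - l₃) * zfact ((l₁ : ℤ) - l₂ + l₃) *
        zfact (-(l₁ : ℤ) + l₂ + l₃) : ℕ) : ℝ) / ((zfact ((l₁ : ℤ) + l₂ + l₃ + 1) : ℕ) : ℝ)) *
    Real.sqrt (((zfact ((l₃ : ℤ) + m₃) * zfact ((l₃ : ℤ) - m₃) : ℕ) : ℝ) /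
      ((zfact ((l₁ : ℤ) + m₁) * zfact ((l₁ : ℤ) - m₁) * zfact ((l₂ : ℤ) + m₂) *
        zfact ((l₂ : ℤ) - m₂) : ℕ) : ℝ)) *
    ∑ z ∈ Finset.range (l₁ + l₂ + l₃ + 1),
      if (l₂ : ℤ) + l₃ + m₁ - z ≥ 0 ∧ (l₁ : ℤ) - m₁ + z ≥ 0 ∧ (l₂ : ℤ) + l₃ - l₁ - z ≥ 0 ∧
          (l₃ : ℤ) + m₃ - z ≥ 0 ∧ (l₁ : ℤ) - l₂ - m₃ + z ≥ 0 then
        (-1 : ℝ) ^ z * ((zfact ((l₂ : ℤ) + l₃ + m₁ - z) * zfact ((l₁ : ℤ) - m₁ + z) : ℕ) : ℝ) /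
          ((Nat.factorial z * zfact ((l₂ : ℤ) + l₃ - l₁ - z) * zfact ((l₃ : ℤ) + m₃ - z) *
            zfact ((l₁ : ℤ) - l₂ - m₃ + z) : ℕ) : ℝ)
      else 0
  else 0

/-- Index set for the independent real Gaussian coordinates of the random spherical harmonic
coefficients: a triple `(l, m, b)` with `1 ≤ l`, `0 ≤ m ≤ l`, where `b` distinguishes real and
imaginary parts (only the real part is used when `m = 0`). -/
def GaussIx : Type := {q : ℕ × ℕ × Bool // 1 ≤ q.1 ∧ q.2.1 ≤ q.1 ∧ (q.2.1 = 0 → q.2.2 = false)}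

/-- The real Gaussian coordinate associated to an index. -/
def coordFn {Ω : Type*} (a : ℕ → ℤ → Ω → ℂ) (i : GaussIx) (ω : Ω) : ℝ :=
  if i.1.2.2 then (a i.1.1 (i.1.2.1 : ℤ) ω).im else (a i.1.1 (i.1.2.1 : ℤ) ω).re

/-- The variance of the Gaussian coordinate associated to an index:
`C l` for `a_{l0}`, and `C l / 2` for real and imaginary parts when `m ≠ 0`. -/
def coordVar (C : ℕ → ℝ) (i : GaussIx) : NNReal :=
  if i.1.2.1 = 0 then (C i.1.1).toNNReal else (C i.1.1 / 2).toNNReal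

/-- The Gaussian isotropic model for the random spherical harmonic coefficients `a_{lm}`,
with angular power spectrum `C`. -/
structure CMBModel {Ω : Type*} [MeasurableSpace Ω] (μ : Measure Ω) (C : ℕ → ℝ)
    (a : ℕ → ℤ → Ω → ℂ) : Prop where
  cPos : ∀ l, 1 ≤ l → 0 < C l
  aZeroReal : ∀ l, 1 ≤ l → ∀ ω, (a l 0 ω).im = 0
  aConj : ∀ l, 1 ≤ l → ∀ m : ℕ, 1 ≤ m → m ≤ l → ∀ ω,
    a l (-(m : ℤ)) ω = (-1 : ℂ) ^ m * (starRingEnd ℂ) (a l (m : ℤ) ω)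
  indep : iIndepFun (coordFn a) μ
  gauss : ∀ i : GaussIx, Measure.map (coordFn a i) μ = gaussianReal 0 (coordVar C i)

/-- The sample angle-averaged bispectrum. -/
def Bhat {Ω : Type*} (a : ℕ → ℤ → Ω → ℂ) (l₁ l₂ l₃ : ℕ) (ω : Ω) : ℂ :=
  ∑ m₁ ∈ mrange l₁, ∑ m₂ ∈ mrange l₂, ∑ m₃ ∈ mrange l₃,
    ((w3j l₁ l₂ l₃ m₁ m₂ m₃ : ℝ) : ℂ) * a l₁ m₁ ω * a l₂ m₂ ω * a l₃ m₃ ω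

/-- The normalized bispectrum (known angular power spectrum). -/
def Ibis {Ω : Type*} (C : ℕ → ℝ) (a : ℕ → ℤ → Ω → ℂ) (l₁ l₂ l₃ : ℕ) (ω : Ω) : ℝ :=
  (-1 : ℝ) ^ ((l₁ + l₂ + l₃) / 2) * (Bhat a l₁ l₂ l₃ ω).re /
    Real.sqrt (C l₁ * C l₂ * C l₃)

/-- The sample estimator of the angular power spectrum. -/
def Chat {Ω : Type*} (a : ℕ → ℤ → Ω → ℂ) (l : ℕ) (ω : Ω) : ℝ :=
  (2 * (l : ℝ) + 1)⁻¹ * ∑ m ∈ mrange l, Complex.normSq (a l m ω)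

/-- The feasible normalized bispectrum (estimated angular power spectrum). -/
def Ihat {Ω : Type*} (a : ℕ → ℤ → Ω → ℂ) (l₁ l₂ l₃ : ℕ) (ω : Ω) : ℝ :=
  (-1 : ℝ) ^ ((l₁ + l₂ + l₃) / 2) * (Bhat a l₁ l₂ l₃ ω).re /
    Real.sqrt (Chat a l₁ ω * Chat a l₂ ω * Chat a l₃ ω)

/-- The combinatorial factor `Δ_{l₁l₂l₃}` (for `l₁ ≤ l₂ ≤ l₃`). -/
def Delta (l₁ l₂ l₃ : ℕ) : ℝ :=
  if l₁ < l₂ ∧ l₂ < l₃ then 1 else if l₁ = l₂ ∧ l₂ = l₃ then 6 else 2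
/-- The correction factor `g(l;p) = ∏_{k=1}^p (2l+1)/(2l+2k-1)`. -/
def gfun (l p : ℕ) : ℝ := ∏ k ∈ Finset.Icc 1 p, (2 * (l : ℝ) + 1) / (2 * l + 2 * k - 1)

/-- The multiset `{l₁, l₂, l₃}` of the components of a triple. -/
def tripleMultiset (l : ℕ × ℕ × ℕ) : Multiset ℕ := {l.1, l.2.1, l.2.2}

/-- The correction factor `G[(l_{11},l_{12},l_{13}),…,(l_{I1},l_{I2},l_{I3}); p₁,…,p_I]`:
repeat each triple `2pᵢ` times, and take `∏_u g(ℓ̄_u ; #(u)/2)` over the distinct values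
`ℓ̄_u`, where `#(u)` is the multiplicity of `ℓ̄_u`. -/
def Gfactor {I : ℕ} (l : Fin I → ℕ × ℕ × ℕ) (p : Fin I → ℕ) : ℝ :=
  let M : Multiset ℕ := ∑ i : Fin I, (2 * p i) • tripleMultiset (l i)
  ∏ u ∈ M.toFinset, gfun u (M.count u / 2)

/-!
With `r_l = Ĉ_l / C_l`, one has `I² = Î² r_{l₁} r_{l₂} r_{l₃}`. The real coordinates of one
multipole `l` form a block of `2l + 1` independent Gaussians whose normalised mean square is `r_l`.
Since `Î` is invariant under dilations of each block, it decouples from the radii `r_l`, so the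
moments of `I` are those of `Î` times `∏_u E[r_u ^ (#(u)/2)]`, and `E[r_l ^ k] = 1 / g(l; k)`.

The decoupling needs no polar coordinates. Insert `1 = ∫_1^∞ α r exp(-α r (t - 1)) dt` with
`α = (2l + 1) / 2` into `E[G r^k]`, where `G` is invariant under dilations of the block.
Substituting `x ↦ √t x` on the block multiplies `r` by `t` and absorbs the exponential, so that
`E[G r^k] = α / (α + k) E[G r^(k+1)]`.
-/

open Set in
lemma lintegral_Ioi_one_exp {c : ℝ} (hc : 0 < c) :
    ∫⁻ t in Ioi (1 : ℝ), ENNReal.ofReal (c * Real.exp (-(c * (t - 1)))) = 1 := by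
  have hsplit (t : ℝ) : c * Real.exp (-(c * (t - 1))) = c * Real.exp c * Real.exp (-c * t) := by
    rw [mul_assoc, ← Real.exp_add]
    ring_nf
  simp_rw [hsplit]
  rw [← ofReal_integral_eq_lintegral_ofReal
      ((integrableOn_exp_mul_Ioi (neg_lt_zero.2 hc) 1).const_mul _)
      (.of_forall fun t => by positivity),
    integral_const_mul, integral_exp_mul_Ioi (neg_lt_zero.2 hc), mul_one, neg_div_neg_eq,
    mul_div_assoc', mul_assoc, ← Real.exp_add, add_neg_cancel, Real.exp_zero, mul_one,
    div_self hc.ne', ENNReal.ofReal_one]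

open Set in
lemma lintegral_Ioi_one_rpow {β : ℝ} (hβ : 0 < β) :
    ∫⁻ t in Ioi (1 : ℝ), ENNReal.ofReal (t ^ (-(β + 1))) = ENNReal.ofReal β⁻¹ := by
  have hlt : -(β + 1) < -1 := by linarith
  rw [← ofReal_integral_eq_lintegral_ofReal (integrableOn_Ioi_rpow_of_lt hlt one_pos)
      (ae_restrict_of_forall_mem measurableSet_Ioi fun t ht =>
        Real.rpow_nonneg (one_pos.trans ht).le _),
    integral_Ioi_rpow_of_lt hlt one_pos, Real.one_rpow, neg_add, neg_add_cancel_right,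
    neg_div_neg_eq, one_div]

section GammaRadius

variable {E : Type*} [MeasurableSpace E] {γ : Measure E}

/-- Under `γ`, the function `r` is distributed like a Gamma variable of shape `α` scaled to mean
one, and independently of everything invariant under the dilations `D t`. This is encoded by the
change-of-variables formula along `D`, which multiplies `r` by `t`. -/
structure IsGammaRadius (γ : Measure E) (D : ℝ → E → E) (r : E → ℝ) (α : ℝ) : Prop where
  shape_pos : 0 < α
  measurable : Measurable r
  ae_pos : ∀ᵐ x ∂γ, 0 < r x
  dilate : ∀ t, 1 < t → ∀ x, r (D t x) = t * r x
  lintegral_dilate : ∀ t, 1 < t → ∀ f : E → ENNReal, Measurable f →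
    ∫⁻ x, f (D t x) * ENNReal.ofReal (Real.exp (-(α * r x * (t - 1)))) ∂γ =
      ENNReal.ofReal (t ^ (-α)) * ∫⁻ x, f x ∂γ

/-- The `k`-th moment of a Gamma variable of shape `α` scaled to mean one. -/
def gammaMoment (α : ℝ) (k : ℕ) : ℝ := ∏ j ∈ Finset.range k, (1 + j / α)

lemma gammaMoment_nonneg {α : ℝ} (hα : 0 < α) (k : ℕ) : 0 ≤ gammaMoment α k :=
  Finset.prod_nonneg fun j _ => by positivity

namespace IsGammaRadius

lemma lintegral_dilate_pow {D : ℝ → E → E} {r : E → ℝ} {α : ℝ} (h : IsGammaRadius γ D r α)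
    {G : E → ENNReal} (hG : Measurable G) (hGD : ∀ t, 1 < t → ∀ x, G (D t x) = G x) (k : ℕ)
    {t : ℝ} (ht : 1 < t) :
    ∫⁻ x, G x * ENNReal.ofReal (r x) ^ k *
        ENNReal.ofReal (Real.exp (-(α * r x * (t - 1)))) ∂γ =
      ENNReal.ofReal (t ^ (-(α + k))) * ∫⁻ x, G x * ENNReal.ofReal (r x) ^ k ∂γ := by
  have hr := h.measurable
  have ht0 : 0 < t := one_pos.trans ht
  have hsplit : ENNReal.ofReal (t ^ (-(α + k))) =
      (ENNReal.ofReal t ^ k)⁻¹ * ENNReal.ofReal (t ^ (-α)) := by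
    rw [← ENNReal.ofReal_pow ht0.le, ← ENNReal.ofReal_inv_of_pos (by positivity),
      ← ENNReal.ofReal_mul (by positivity), neg_add_rev, Real.rpow_add ht0,
      Real.rpow_neg ht0.le, Real.rpow_natCast]
  have ht_ne : ENNReal.ofReal t ^ k ≠ 0 := by simp [ht0]
  rw [hsplit, mul_assoc, ← h.lintegral_dilate t ht _ (by fun_prop),
    ← lintegral_const_mul' _ _ (ENNReal.inv_ne_top.2 ht_ne)]
  refine lintegral_congr fun x => ?_
  rw [hGD t ht, h.dilate t ht, ENNReal.ofReal_mul ht0.le, mul_pow, ← mul_assoc, mul_left_comm (G x),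
    ← mul_assoc, ENNReal.inv_mul_cancel ht_ne (by finiteness), one_mul]

lemma lintegral_mul_pow_eq [SFinite γ] {D : ℝ → E → E} {r : E → ℝ} {α : ℝ}
    (h : IsGammaRadius γ D r α) {G : E → ENNReal} (hG : Measurable G)
    (hGD : ∀ t, 1 < t → ∀ x, G (D t x) = G x) (k : ℕ) :
    ∫⁻ x, G x * ENNReal.ofReal (r x) ^ k ∂γ =
      ENNReal.ofReal (α / (α + k)) * ∫⁻ x, G x * ENNReal.ofReal (r x) ^ (k + 1) ∂γ := by
  have hα := h.shape_pos
  have hr := h.measurable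
  have hexp : ∀ᵐ x ∂γ, G x * ENNReal.ofReal (r x) ^ k = ∫⁻ t in Set.Ioi (1 : ℝ),
      ENNReal.ofReal α * (G x * ENNReal.ofReal (r x) ^ (k + 1) *
        ENNReal.ofReal (Real.exp (-(α * r x * (t - 1))))) := by
    filter_upwards [h.ae_pos] with x hx
    rw [← mul_one (G x * _), ← lintegral_Ioi_one_exp (mul_pos hα hx),
      ← lintegral_const_mul _ (by fun_prop)]
    refine lintegral_congr fun t => ?_
    rw [ENNReal.ofReal_mul (by positivity), ENNReal.ofReal_mul hα.le]
    ring
  calc ∫⁻ x, G x * ENNReal.ofReal (r x) ^ k ∂γ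
      = ∫⁻ t in Set.Ioi (1 : ℝ), ∫⁻ x, ENNReal.ofReal α * (G x * ENNReal.ofReal (r x) ^ (k + 1) *
          ENNReal.ofReal (Real.exp (-(α * r x * (t - 1))))) ∂γ := by
        rw [lintegral_congr_ae hexp, lintegral_lintegral_swap (by fun_prop)]
    _ = ∫⁻ t in Set.Ioi (1 : ℝ), ENNReal.ofReal α * (ENNReal.ofReal (t ^ (-(α + k + 1))) *
          ∫⁻ x, G x * ENNReal.ofReal (r x) ^ (k + 1) ∂γ) := by
        refine setLIntegral_congr_fun measurableSet_Ioi fun t ht => ?_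
        rw [lintegral_const_mul _ (by fun_prop), h.lintegral_dilate_pow hG hGD (k + 1) ht,
          Nat.cast_add_one, add_assoc]
    _ = ENNReal.ofReal (α / (α + k)) * ∫⁻ x, G x * ENNReal.ofReal (r x) ^ (k + 1) ∂γ := by
        rw [lintegral_const_mul _ (by fun_prop), lintegral_mul_const _ (by fun_prop),
          lintegral_Ioi_one_rpow (by positivity), ← mul_assoc, ← ENNReal.ofReal_mul hα.le,
          div_eq_mul_inv]

lemma lintegral_mul_pow [SFinite γ] {D : ℝ → E → E} {r : E → ℝ} {α : ℝ}
    (h : IsGammaRadius γ D r α) {G : E → ENNReal} (hG : Measurable G)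
    (hGD : ∀ t, 1 < t → ∀ x, G (D t x) = G x) (k : ℕ) :
    ∫⁻ x, G x * ENNReal.ofReal (r x) ^ k ∂γ =
      ENNReal.ofReal (gammaMoment α k) * ∫⁻ x, G x ∂γ := by
  have hα := h.shape_pos
  induction k with
  | zero => simp [gammaMoment]
  | succ k ih =>
    have hinv : (1 + k / α) * (α / (α + k)) = 1 := by field_simp
    rw [gammaMoment, Finset.prod_range_succ, ← gammaMoment, mul_comm (gammaMoment α k),
      ENNReal.ofReal_mul (by positivity), mul_assoc, ← ih, h.lintegral_mul_pow_eq hG hGD k,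
      ← mul_assoc, ← ENNReal.ofReal_mul (by positivity), hinv, ENNReal.ofReal_one, one_mul]

variable {ι : Type*} {D : ι → ℝ → E → E} {r : ι → E → ℝ} {α : ι → ℝ}

lemma lintegral_mul_prod_pow [SFinite γ] (h : ∀ i, IsGammaRadius γ (D i) (r i) (α i))
    (hrD : ∀ i j, i ≠ j → ∀ t, 1 < t → ∀ x, r j (D i t x) = r j x)
    {H : E → ENNReal} (hH : Measurable H) (hHD : ∀ i t, 1 < t → ∀ x, H (D i t x) = H x)
    (k : ι → ℕ) (s : Finset ι) :
    ∫⁻ x, H x * ∏ i ∈ s, ENNReal.ofReal (r i x) ^ k i ∂γ =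
      ENNReal.ofReal (∏ i ∈ s, gammaMoment (α i) (k i)) * ∫⁻ x, H x ∂γ := by
  classical
  have hr i := (h i).measurable
  induction s using Finset.induction_on with
  | empty => simp
  | insert i s hi ih =>
    have hinv (t : ℝ) (ht : 1 < t) (x : E) :
        H (D i t x) * ∏ j ∈ s, ENNReal.ofReal (r j (D i t x)) ^ k j =
          H x * ∏ j ∈ s, ENNReal.ofReal (r j x) ^ k j := by
      rw [hHD i t ht, Finset.prod_congr rfl fun j hj => by
        rw [hrD i j (ne_of_mem_of_not_mem hj hi).symm t ht]]
    calc ∫⁻ x, H x * ∏ j ∈ insert i s, ENNReal.ofReal (r j x) ^ k j ∂γ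
        = ∫⁻ x, H x * (∏ j ∈ s, ENNReal.ofReal (r j x) ^ k j) *
            ENNReal.ofReal (r i x) ^ k i ∂γ := by
          simp_rw [Finset.prod_insert hi, mul_comm (ENNReal.ofReal (r i _) ^ k i), mul_assoc]
      _ = ENNReal.ofReal (gammaMoment (α i) (k i)) *
            ∫⁻ x, H x * ∏ j ∈ s, ENNReal.ofReal (r j x) ^ k j ∂γ :=
          (h i).lintegral_mul_pow (by fun_prop) hinv (k i)
      _ = ENNReal.ofReal (∏ j ∈ insert i s, gammaMoment (α j) (k j)) * ∫⁻ x, H x ∂γ := by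
          rw [ih, ← mul_assoc, Finset.prod_insert hi,
            ENNReal.ofReal_mul (gammaMoment_nonneg (h i).shape_pos _)]

theorem integral_mul_prod_pow [SFinite γ] (h : ∀ i, IsGammaRadius γ (D i) (r i) (α i))
    (hrD : ∀ i j, i ≠ j → ∀ t, 1 < t → ∀ x, r j (D i t x) = r j x)
    {H : E → ℝ} (hH : Measurable H) (hH0 : 0 ≤ H) (hHD : ∀ i t, 1 < t → ∀ x, H (D i t x) = H x)
    (k : ι → ℕ) (s : Finset ι) :
    ∫ x, H x * ∏ i ∈ s, r i x ^ k i ∂γ =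
      (∏ i ∈ s, gammaMoment (α i) (k i)) * ∫ x, H x ∂γ := by
  have hr i := (h i).measurable
  have hpos : ∀ᵐ x ∂γ, ∀ i ∈ s, 0 < r i x :=
    (ae_ball_iff s.countable_toSet).2 fun i _ => (h i).ae_pos
  have hprod : 0 ≤ ∏ i ∈ s, gammaMoment (α i) (k i) :=
    Finset.prod_nonneg fun i _ => gammaMoment_nonneg (h i).shape_pos _
  rw [integral_eq_lintegral_of_nonneg_ae (.of_forall hH0) (by fun_prop),
    integral_eq_lintegral_of_nonneg_ae _ (by fun_prop), ← ENNReal.toReal_ofReal hprod,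
    ← ENNReal.toReal_mul,
    ← lintegral_mul_prod_pow h hrD (by fun_prop) (fun i t ht x => by rw [hHD i t ht])]
  · congr 1
    refine lintegral_congr_ae ?_
    filter_upwards [hpos] with x hx
    rw [ENNReal.ofReal_mul (hH0 x),
      ENNReal.ofReal_prod_of_nonneg fun i hi => pow_nonneg (hx i hi).le _,
      Finset.prod_congr rfl fun i hi => ENNReal.ofReal_pow (hx i hi).le _]
  · filter_upwards [hpos] with x hx
    exact mul_nonneg (hH0 x) (Finset.prod_nonneg fun i hi => pow_nonneg (hx i hi).le _)

end IsGammaRadius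

end GammaRadius

section PiWithDensity

variable {ι : Type*} [Fintype ι] {X : ι → Type*} [∀ i, MeasurableSpace (X i)]
  {μ : ∀ i, Measure (X i)} [∀ i, IsProbabilityMeasure (μ i)]

lemma lintegral_pi_prod {f : ∀ i, X i → ENNReal} (hf : ∀ i, Measurable (f i)) :
    ∫⁻ x, ∏ i, f i (x i) ∂Measure.pi μ = ∏ i, ∫⁻ y, f i y ∂μ i := by
  have hindep : iIndepFun (fun i (x : ∀ i, X i) => f i (x i)) (Measure.pi μ) :=
    iIndepFun_pi fun i => (hf i).aemeasurable
  rw [lintegral_prod_eq_prod_lintegral_of_indepFun _ _ hindep fun i => by fun_prop]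
  exact Finset.prod_congr rfl fun i _ =>
    (measurePreserving_eval μ i).lintegral_comp (hf i)

lemma pi_withDensity {w : ∀ i, X i → ENNReal} (hw : ∀ i, Measurable (w i))
    [∀ i, SigmaFinite ((μ i).withDensity (w i))] :
    (Measure.pi μ).withDensity (fun x => ∏ i, w i (x i)) =
      Measure.pi fun i => (μ i).withDensity (w i) := by
  refine (Measure.pi_eq fun s hs => ?_).symm
  have hind (x : ∀ i, X i) : (Set.univ.pi s).indicator (fun x => ∏ i, w i (x i)) x =
      ∏ i, (s i).indicator (w i) (x i) := by
    by_cases hx : ∀ i, x i ∈ s i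
    · rw [Set.indicator_of_mem (by simpa using hx)]
      exact Finset.prod_congr rfl fun i _ => (Set.indicator_of_mem (hx i) _).symm
    · obtain ⟨i, hi⟩ := not_forall.1 hx
      rw [Set.indicator_of_notMem (by simpa using hx),
        Finset.prod_eq_zero (Finset.mem_univ i) (Set.indicator_of_notMem hi _)]
  rw [withDensity_apply _ (.univ_pi hs), ← lintegral_indicator (.univ_pi hs)]
  simp_rw [hind]
  rw [lintegral_pi_prod fun i => (hw i).indicator (hs i)]
  exact Finset.prod_congr rfl fun i _ => by
    rw [withDensity_apply _ (hs i), lintegral_indicator (hs i)]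

end PiWithDensity

lemma withDensity_gaussianReal {v : NNReal} (hv : v ≠ 0) {c : NNReal} (hc : c ≠ 0) :
    (gaussianReal 0 v).withDensity
        (fun x => ENNReal.ofReal (c * Real.exp (-((c ^ 2 - 1) * x ^ 2 / (2 * v))))) =
      gaussianReal 0 (v / c ^ 2) := by
  rw [gaussianReal_of_var_ne_zero _ hv, gaussianReal_of_var_ne_zero _ (by positivity),
    ← withDensity_mul _ (by fun_prop) (by fun_prop)]
  congr 1 with x
  have hc0 : (0 : ℝ) < c := by positivity
  simp only [Pi.mul_apply, gaussianPDF, gaussianPDFReal, NNReal.coe_div, NNReal.coe_pow]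
  rw [← ENNReal.ofReal_mul (by positivity), mul_div_assoc', Real.sqrt_div' _ (by positivity),
    Real.sqrt_sq hc0.le, inv_div, mul_mul_mul_comm, ← Real.exp_add]
  congr 2
  · ring
  · congr 1
    field_simp
    ring

lemma map_withDensity_pi_gaussianReal {ι : Type*} [Fintype ι] {v : ι → NNReal} {c : ι → ℝ}
    (hv : ∀ i, v i ≠ 0) (hc : ∀ i, 0 < c i) :
    ((Measure.pi fun i => gaussianReal 0 (v i)).withDensity fun x =>
        ∏ i, ENNReal.ofReal (c i * Real.exp (-((c i ^ 2 - 1) * x i ^ 2 / (2 * v i))))).map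
      (fun x i => c i * x i) = Measure.pi fun i => gaussianReal 0 (v i) := by
  lift c to ι → NNReal using fun i => (hc i).le
  have hc0 i : c i ≠ 0 := (NNReal.coe_pos.1 (hc i)).ne'
  have hdensity i := withDensity_gaussianReal (hv i) (hc0 i)
  have hsigma i : SigmaFinite ((gaussianReal 0 (v i)).withDensity fun y =>
      ENNReal.ofReal (c i * Real.exp (-((c i ^ 2 - 1) * y ^ 2 / (2 * v i))))) := by
    rw [hdensity i]; infer_instance
  rw [pi_withDensity (w := fun i y =>
    ENNReal.ofReal (c i * Real.exp (-((c i ^ 2 - 1) * y ^ 2 / (2 * v i))))) fun i => by fun_prop]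
  simp_rw [hdensity]
  have hmap i : (gaussianReal 0 (v i / c i ^ 2)).map ((c i : ℝ) * ·) = gaussianReal 0 (v i) := by
    rw [gaussianReal_map_const_mul, mul_zero]
    exact congrArg _ (NNReal.eq (mul_div_cancel₀ _ (pow_ne_zero 2 (hc i).ne')))
  have hsigma' i : SigmaFinite ((gaussianReal 0 (v i / c i ^ 2)).map ((c i : ℝ) * ·)) := by
    rw [hmap i]; infer_instance
  rw [Measure.pi_map_pi fun i => by fun_prop]
  simp_rw [hmap]

section Blocks

variable {ι : Type*} {κ : ι → Type*}

/-- Multiplication by `c` of the coordinates in the block `i`, the other blocks being fixed. -/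
def blockScale [DecidableEq ι] (i : ι) (c : ℝ) (x : (Σ i, κ i) → ℝ) : (Σ i, κ i) → ℝ :=
  fun j => (if j.1 = i then c else 1) * x j

lemma measurable_blockScale [DecidableEq ι] (i : ι) (c : ℝ) :
    Measurable (blockScale (κ := κ) i c) := by
  unfold blockScale
  fun_prop

/-- The mean over the block `i` of the squared coordinates, each divided by its variance. -/
def blockMeanSq [∀ i, Fintype (κ i)] (v : (Σ i, κ i) → NNReal) (i : ι) (x : (Σ i, κ i) → ℝ) : ℝ :=
  (∑ m, x ⟨i, m⟩ ^ 2 / v ⟨i, m⟩) / Fintype.card (κ i)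

variable [∀ i, Fintype (κ i)] {v : (Σ i, κ i) → NNReal}

@[fun_prop]
lemma measurable_blockMeanSq (i : ι) : Measurable (blockMeanSq v i) := by
  unfold blockMeanSq
  fun_prop

lemma ae_blockMeanSq_pos [Fintype ι] (hv : ∀ j, v j ≠ 0) (i : ι) [Nonempty (κ i)] :
    ∀ᵐ x ∂Measure.pi fun j => gaussianReal 0 (v j), 0 < blockMeanSq v i x := by
  obtain ⟨m⟩ := ‹Nonempty (κ i)›
  have hnull : ∀ᵐ x ∂Measure.pi fun j => gaussianReal 0 (v j), x ⟨i, m⟩ ≠ 0 := by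
    have := nullSingletonClass_gaussianReal (μ := 0) (hv ⟨i, m⟩)
    rw [ae_iff]
    simpa using Measure.pi_hyperplane (fun j => gaussianReal 0 (v j)) ⟨i, m⟩ 0
  filter_upwards [hnull] with x hx
  have hv0 : 0 < v ⟨i, m⟩ := pos_iff_ne_zero.2 (hv _)
  have : 0 < Fintype.card (κ i) := Fintype.card_pos_iff.2 ⟨m⟩
  exact div_pos (Finset.sum_pos' (fun _ _ => by positivity)
    ⟨m, Finset.mem_univ m, by positivity⟩) (by positivity)

variable [DecidableEq ι]

lemma blockMeanSq_blockScale (i j : ι) (c : ℝ) (x : (Σ i, κ i) → ℝ) :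
    blockMeanSq v j (blockScale i c x) = (if j = i then c else 1) ^ 2 * blockMeanSq v j x := by
  rw [blockMeanSq, blockMeanSq, ← mul_div_assoc, Finset.mul_sum]
  simp only [blockScale, mul_pow, mul_div_assoc]

variable [Fintype ι]

lemma prod_block_const (i : ι) (c : ℝ) :
    ∏ j : Σ i, κ i, (if j.1 = i then c else 1) = c ^ Fintype.card (κ i) := by
  rw [Fintype.prod_sigma, Finset.prod_eq_single i] <;> simp +contextual

lemma prod_block_gaussian_weight (i : ι) {t : ℝ} (ht : 0 < t)
    (x : (Σ i, κ i) → ℝ) :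
    ∏ j : Σ i, κ i, ((if j.1 = i then √t else 1) *
        Real.exp (-(((if j.1 = i then √t else 1) ^ 2 - 1) * x j ^ 2 / (2 * v j)))) =
      t ^ ((Fintype.card (κ i) : ℝ) / 2) *
        Real.exp (-((Fintype.card (κ i) : ℝ) / 2 * blockMeanSq v i x * (t - 1))) := by
  rw [Finset.prod_mul_distrib, prod_block_const, ← Real.exp_sum, Real.sqrt_eq_rpow,
    ← Real.rpow_mul_natCast ht.le, one_div_mul_eq_div]
  congr 2
  rw [Finset.sum_neg_distrib, Fintype.sum_sigma, Finset.sum_eq_single i, ← Real.sqrt_eq_rpow]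
  · simp only [if_true, Real.sq_sqrt ht.le, blockMeanSq, Finset.sum_div, Finset.mul_sum,
      Finset.sum_mul, ← Finset.sum_neg_distrib]
    refine Finset.sum_congr rfl fun m _ => ?_
    have : Nonempty (κ i) := ⟨m⟩
    field_simp
  · intro k _ hk
    simp [hk]
  · simp

lemma map_blockScale_withDensity (hv : ∀ j, v j ≠ 0) (i : ι) {t : ℝ} (ht : 0 < t) :
    ((Measure.pi fun j => gaussianReal 0 (v j)).withDensity fun x =>
        ENNReal.ofReal (t ^ ((Fintype.card (κ i) : ℝ) / 2) *
          Real.exp (-((Fintype.card (κ i) : ℝ) / 2 * blockMeanSq v i x * (t - 1))))).map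
      (blockScale i √t) = Measure.pi fun j => gaussianReal 0 (v j) := by
  have hc (j : Σ i, κ i) : 0 < if j.1 = i then √t else 1 := by split_ifs <;> positivity
  unfold blockScale
  simpa only [← ENNReal.ofReal_prod_of_nonneg fun j _ => mul_nonneg (hc j).le (Real.exp_nonneg _),
    prod_block_gaussian_weight i ht] using map_withDensity_pi_gaussianReal hv hc

theorem isGammaRadius_blockMeanSq (hv : ∀ j, v j ≠ 0) (i : ι) [Nonempty (κ i)] :
    IsGammaRadius (Measure.pi fun j => gaussianReal 0 (v j)) (fun t => blockScale i √t)
      (blockMeanSq v i) (Fintype.card (κ i) / 2) where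
  shape_pos := by have := Fintype.card_pos (α := κ i); positivity
  measurable := measurable_blockMeanSq i
  ae_pos := ae_blockMeanSq_pos hv i
  dilate t ht x := by
    rw [blockMeanSq_blockScale, if_pos rfl, Real.sq_sqrt (one_pos.trans ht).le]
  lintegral_dilate t ht f hf := by
    have ht0 : 0 < t := one_pos.trans ht
    have hD := measurable_blockScale (κ := κ) i √t
    conv_rhs => rw [← map_blockScale_withDensity hv i ht0]
    rw [lintegral_map hf hD, lintegral_withDensity_eq_lintegral_mul _ (by fun_prop) (by fun_prop),
      ← lintegral_const_mul _ (by fun_prop)]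
    refine lintegral_congr fun x => ?_
    rw [Pi.mul_apply, ← mul_assoc, ← ENNReal.ofReal_mul (by positivity), ← mul_assoc,
      ← Real.rpow_add ht0, neg_add_cancel, Real.rpow_zero, one_mul, mul_comm]

theorem integral_mul_prod_blockMeanSq_pow (hv : ∀ j, v j ≠ 0) [∀ i, Nonempty (κ i)]
    {H : ((Σ i, κ i) → ℝ) → ℝ} (hH : Measurable H) (hH0 : 0 ≤ H)
    (hHD : ∀ i c, 0 < c → ∀ x, H (blockScale i c x) = H x) (k : ι → ℕ) :
    ∫ x, H x * ∏ i, blockMeanSq v i x ^ k i ∂Measure.pi (fun j => gaussianReal 0 (v j)) =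
      (∏ i, gammaMoment (Fintype.card (κ i) / 2) (k i)) *
        ∫ x, H x ∂Measure.pi fun j => gaussianReal 0 (v j) :=
  IsGammaRadius.integral_mul_prod_pow (fun i => isGammaRadius_blockMeanSq hv i)
    (fun i j hij t _ x => by rw [blockMeanSq_blockScale, if_neg hij.symm, one_pow, one_mul])
    hH hH0 (fun i t ht => hHD i √t (Real.sqrt_pos.2 (one_pos.trans ht))) k Finset.univ

end Blocks

section Scaling

variable {Ω Ω' : Type*} {a : ℕ → ℤ → Ω → ℂ} {b : ℕ → ℤ → Ω' → ℂ} {ω : Ω} {ω' : Ω'}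
  {l l₁ l₂ l₃ : ℕ} {c c₁ c₂ c₃ : ℝ}

lemma Chat_eq_sq_mul (h : ∀ m ∈ mrange l, b l m ω' = c * a l m ω) :
    Chat b l ω' = c ^ 2 * Chat a l ω := by
  simp only [Chat, Finset.mul_sum]
  refine Finset.sum_congr rfl fun m hm => ?_
  rw [h m hm, Complex.normSq_mul, Complex.normSq_ofReal]
  ring

lemma Bhat_eq_mul (h₁ : ∀ m ∈ mrange l₁, b l₁ m ω' = c₁ * a l₁ m ω)
    (h₂ : ∀ m ∈ mrange l₂, b l₂ m ω' = c₂ * a l₂ m ω)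
    (h₃ : ∀ m ∈ mrange l₃, b l₃ m ω' = c₃ * a l₃ m ω) :
    Bhat b l₁ l₂ l₃ ω' = (c₁ * c₂ * c₃ : ℝ) * Bhat a l₁ l₂ l₃ ω := by
  simp only [Bhat, Finset.mul_sum]
  refine Finset.sum_congr rfl fun m₁ hm₁ => Finset.sum_congr rfl fun m₂ hm₂ =>
    Finset.sum_congr rfl fun m₃ hm₃ => ?_
  rw [h₁ m₁ hm₁, h₂ m₂ hm₂, h₃ m₃ hm₃]
  push_cast
  ring

lemma Ihat_eq_of_scaled (hc₁ : 0 < c₁) (hc₂ : 0 < c₂) (hc₃ : 0 < c₃)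
    (h₁ : ∀ m ∈ mrange l₁, b l₁ m ω' = c₁ * a l₁ m ω)
    (h₂ : ∀ m ∈ mrange l₂, b l₂ m ω' = c₂ * a l₂ m ω)
    (h₃ : ∀ m ∈ mrange l₃, b l₃ m ω' = c₃ * a l₃ m ω) :
    Ihat b l₁ l₂ l₃ ω' = Ihat a l₁ l₂ l₃ ω := by
  have hsqrt : √(Chat b l₁ ω' * Chat b l₂ ω' * Chat b l₃ ω') =
      c₁ * c₂ * c₃ * √(Chat a l₁ ω * Chat a l₂ ω * Chat a l₃ ω) := by
    have hfactor (A B D : ℝ) :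
        c₁ ^ 2 * A * (c₂ ^ 2 * B) * (c₃ ^ 2 * D) = (c₁ * c₂ * c₃) ^ 2 * (A * B * D) := by ring
    rw [Chat_eq_sq_mul h₁, Chat_eq_sq_mul h₂, Chat_eq_sq_mul h₃, hfactor,
      Real.sqrt_mul (by positivity), Real.sqrt_sq (by positivity)]
  rw [Ihat, Ihat, hsqrt, Bhat_eq_mul h₁ h₂ h₃, Complex.re_ofReal_mul, mul_left_comm,
    mul_div_mul_left _ _ (by positivity)]

lemma Ihat_congr (h₁ : ∀ m ∈ mrange l₁, b l₁ m ω' = a l₁ m ω)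
    (h₂ : ∀ m ∈ mrange l₂, b l₂ m ω' = a l₂ m ω) (h₃ : ∀ m ∈ mrange l₃, b l₃ m ω' = a l₃ m ω) :
    Ihat b l₁ l₂ l₃ ω' = Ihat a l₁ l₂ l₃ ω :=
  Ihat_eq_of_scaled one_pos one_pos one_pos (by simpa using h₁) (by simpa using h₂)
    (by simpa using h₃)

lemma Ibis_congr (C : ℕ → ℝ) (h₁ : ∀ m ∈ mrange l₁, b l₁ m ω' = a l₁ m ω)
    (h₂ : ∀ m ∈ mrange l₂, b l₂ m ω' = a l₂ m ω) (h₃ : ∀ m ∈ mrange l₃, b l₃ m ω' = a l₃ m ω) :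
    Ibis C b l₁ l₂ l₃ ω' = Ibis C a l₁ l₂ l₃ ω := by
  have hB : Bhat b l₁ l₂ l₃ ω' = (1 * 1 * 1 : ℝ) * Bhat a l₁ l₂ l₃ ω :=
    Bhat_eq_mul (by simpa using h₁) (by simpa using h₂) (by simpa using h₃)
  rw [Ibis, Ibis, hB, one_mul, one_mul, Complex.ofReal_one, one_mul]

lemma Ibis_sq {C : ℕ → ℝ} (hC₁ : 0 < C l₁) (hC₂ : 0 < C l₂) (hC₃ : 0 < C l₃)
    (h₁ : 0 < Chat a l₁ ω) (h₂ : 0 < Chat a l₂ ω) (h₃ : 0 < Chat a l₃ ω) :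
    Ibis C a l₁ l₂ l₃ ω ^ 2 = Ihat a l₁ l₂ l₃ ω ^ 2 *
      (Chat a l₁ ω / C l₁ * (Chat a l₂ ω / C l₂) * (Chat a l₃ ω / C l₃)) := by
  rw [Ibis, Ihat, div_pow, div_pow, Real.sq_sqrt (by positivity), Real.sq_sqrt (by positivity)]
  field_simp

end Scaling

section Measurability

variable {Ω : Type*} [MeasurableSpace Ω] {a : ℕ → ℤ → Ω → ℂ}

lemma measurable_Bhat (ha : ∀ l m, Measurable (a l m)) (l₁ l₂ l₃ : ℕ) :
    Measurable (Bhat a l₁ l₂ l₃) := by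
  unfold Bhat
  fun_prop

lemma measurable_Chat (ha : ∀ l m, Measurable (a l m)) (l : ℕ) : Measurable (Chat a l) := by
  have hnormSq : Measurable Complex.normSq := Complex.continuous_normSq.measurable
  unfold Chat
  fun_prop

lemma measurable_Ihat (ha : ∀ l m, Measurable (a l m)) (l₁ l₂ l₃ : ℕ) :
    Measurable (Ihat a l₁ l₂ l₃) := by
  have hB := measurable_Bhat ha l₁ l₂ l₃
  have hC := measurable_Chat ha
  unfold Ihat
  fun_prop

lemma measurable_Ibis (C : ℕ → ℝ) (ha : ∀ l m, Measurable (a l m)) (l₁ l₂ l₃ : ℕ) :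
    Measurable (Ibis C a l₁ l₂ l₃) := by
  have hB := measurable_Bhat ha l₁ l₂ l₃
  unfold Ibis
  fun_prop

end Measurability

section Coefficients

lemma mem_mrange {l : ℕ} {m : ℤ} : m ∈ mrange l ↔ m.natAbs ≤ l := by
  rw [mrange, Finset.mem_Icc]
  lia

lemma card_mrange (l : ℕ) : (mrange l).card = 2 * l + 1 := by
  rw [mrange, Int.card_Icc]
  lia

instance nonempty_mrange (l : ℕ) : Nonempty (mrange l) := ⟨0, by simp [mem_mrange]⟩

/-- The spherical harmonic coefficients `a_{lm}`, `-l ≤ m ≤ l`, at a fixed multipole, built from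
real coordinates `y`: for `m > 0`, the real and imaginary parts of `a_{lm}` are `y m` and
`y (-m)`. -/
def complexCoeff (y : ℤ → ℝ) (m : ℤ) : ℂ :=
  if m = 0 then y 0
  else if 0 < m then y m + y (-m) * Complex.I
  else (-1) ^ m.natAbs * (y (-m) - y m * Complex.I)

lemma complexCoeff_const_mul (c : ℝ) (y : ℤ → ℝ) (m : ℤ) :
    complexCoeff (fun n => c * y n) m = c * complexCoeff y m := by
  unfold complexCoeff
  push_cast
  split_ifs <;> ring

lemma normSq_complexCoeff (y : ℤ → ℝ) (m : ℤ) :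
    Complex.normSq (complexCoeff y m) = if m = 0 then y 0 ^ 2 else y m ^ 2 + y (-m) ^ 2 := by
  unfold complexCoeff
  split_ifs
  · rw [Complex.normSq_ofReal, sq]
  · rw [Complex.normSq_add_mul_I]
  · rw [map_mul, map_pow, Complex.normSq_neg, Complex.normSq_one, one_pow, one_mul,
      sub_eq_add_neg, ← neg_mul, ← Complex.ofReal_neg, Complex.normSq_add_mul_I]
    ring

lemma sum_normSq_complexCoeff (l : ℕ) (y : ℤ → ℝ) :
    ∑ m ∈ mrange l, Complex.normSq (complexCoeff y m) =
      ∑ m ∈ mrange l, (if m = 0 then 1 else 2) * y m ^ 2 := by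
  have hsymm : ∑ m ∈ mrange l, (if m = 0 then 0 else y (-m) ^ 2) =
      ∑ m ∈ mrange l, (if m = 0 then 0 else y m ^ 2) :=
    Finset.sum_equiv (Equiv.neg ℤ) (by simp [mem_mrange]) (by simp)
  have hsplit (m : ℤ) : Complex.normSq (complexCoeff y m) =
      y m ^ 2 + if m = 0 then 0 else y (-m) ^ 2 := by
    rw [normSq_complexCoeff]
    split_ifs with h <;> simp [h]
  simp only [hsplit]
  rw [Finset.sum_add_distrib, hsymm, ← Finset.sum_add_distrib]
  refine Finset.sum_congr rfl fun m _ => ?_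
  split_ifs <;> ring

end Coefficients

section Model

variable {S : Finset ℕ}

/-- Extension by zero of a family of coordinates indexed by the `(l, m)` with `l ∈ S`, `|m| ≤ l`. -/
def zeroExtend (x : (Σ l : S, mrange l) → ℝ) (l : ℕ) (m : ℤ) : ℝ :=
  if h : l ∈ S ∧ m ∈ mrange l then x ⟨⟨l, h.1⟩, ⟨m, h.2⟩⟩ else 0

lemma zeroExtend_of_mem (x : (Σ l : S, mrange l) → ℝ) {l : ℕ} {m : ℤ} (hl : l ∈ S)
    (hm : m ∈ mrange l) : zeroExtend x l m = x ⟨⟨l, hl⟩, ⟨m, hm⟩⟩ :=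
  dif_pos ⟨hl, hm⟩

lemma zeroExtend_blockScale (u : S) (c : ℝ) (x : (Σ l : S, mrange l) → ℝ) (l : ℕ) (m : ℤ) :
    zeroExtend (blockScale u c x) l m = (if l = u then c else 1) * zeroExtend x l m := by
  unfold zeroExtend blockScale
  split_ifs <;> simp_all [Subtype.ext_iff]

/-- The coefficients `a_{lm}` as functions of their real coordinates, for the finitely many
multipoles `l ∈ S` (and zero for the others). -/
def modelCoeff (S : Finset ℕ) (l : ℕ) (m : ℤ) (x : (Σ l : S, mrange l) → ℝ) : ℂ :=
  complexCoeff (zeroExtend x l) m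

lemma modelCoeff_blockScale (u : S) (c : ℝ) (x : (Σ l : S, mrange l) → ℝ) (l : ℕ) (m : ℤ) :
    modelCoeff S l m (blockScale u c x) =
      ((if l = u then c else 1 : ℝ) : ℂ) * modelCoeff S l m x := by
  rw [modelCoeff, modelCoeff, ← complexCoeff_const_mul]
  simp only [← zeroExtend_blockScale]

lemma measurable_modelCoeff (S : Finset ℕ) (l : ℕ) (m : ℤ) : Measurable (modelCoeff S l m) := by
  have hcoord (m : ℤ) : Measurable fun x : (Σ l : S, mrange l) → ℝ => zeroExtend x l m := by
    unfold zeroExtend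
    split_ifs <;> fun_prop
  unfold modelCoeff complexCoeff
  split_ifs <;> fun_prop

lemma Ihat_modelCoeff_blockScale (u : S) {c : ℝ} (hc : 0 < c) (l₁ l₂ l₃ : ℕ)
    (x : (Σ l : S, mrange l) → ℝ) :
    Ihat (modelCoeff S) l₁ l₂ l₃ (blockScale u c x) = Ihat (modelCoeff S) l₁ l₂ l₃ x := by
  have hpos (l : ℕ) : 0 < if l = u then c else 1 := by split_ifs <;> positivity
  exact Ihat_eq_of_scaled (hpos l₁) (hpos l₂) (hpos l₃)
    (fun m _ => modelCoeff_blockScale u c x l₁ m) (fun m _ => modelCoeff_blockScale u c x l₂ m)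
    (fun m _ => modelCoeff_blockScale u c x l₃ m)

lemma Chat_modelCoeff (u : S) (x : (Σ l : S, mrange l) → ℝ) :
    Chat (modelCoeff S) u x =
      (∑ m : mrange u, (if (m : ℤ) = 0 then 1 else 2) * x ⟨u, m⟩ ^ 2) / (2 * u + 1) := by
  have hcoord (m : mrange u) : x ⟨u, m⟩ = zeroExtend x u m :=
    (zeroExtend_of_mem x u.2 m.2).symm
  simp only [Chat, modelCoeff, sum_normSq_complexCoeff, hcoord, inv_mul_eq_div]
  rw [Finset.sum_coe_sort (mrange u)
    fun m => (if m = 0 then (1 : ℝ) else 2) * zeroExtend x u m ^ 2]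

/-- The coordinate of `a_{lm}` used in `modelCoeff`: the real part of `a_{lm}` for `m ≥ 0` and the
imaginary part of `a_{l,-m}` for `m < 0`. -/
def gaussIx (hS : ∀ l ∈ S, 1 ≤ l) (j : Σ l : S, mrange l) : GaussIx :=
  ⟨(j.1, j.2.1.natAbs, decide (j.2.1 < 0)), hS j.1 j.1.2, mem_mrange.1 j.2.2, by
    simp only [Int.natAbs_eq_zero, decide_eq_false_iff_not]
    lia⟩

lemma gaussIx_injective (hS : ∀ l ∈ S, 1 ≤ l) : Function.Injective (gaussIx hS) := by
  rintro ⟨⟨l, hl⟩, m, hm⟩ ⟨⟨l', hl'⟩, m', hm'⟩ h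
  have hval := congrArg Subtype.val h
  simp only [gaussIx, Prod.mk.injEq, decide_eq_decide] at hval
  obtain ⟨rfl, habs, hsign⟩ := hval
  obtain rfl : m = m' := by lia
  rfl

variable {C : ℕ → ℝ}

lemma coe_coordVar_gaussIx (hS : ∀ l ∈ S, 1 ≤ l) (hC : ∀ l ∈ S, 0 < C l)
    (j : Σ l : S, mrange l) :
    (coordVar C (gaussIx hS j) : ℝ) = C j.1 / if (j.2 : ℤ) = 0 then 1 else 2 := by
  have hC0 : 0 ≤ C j.1 := (hC j.1 j.1.2).le
  simp only [coordVar, gaussIx, Int.natAbs_eq_zero]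
  split_ifs
  · rw [Real.coe_toNNReal _ hC0, div_one]
  · rw [Real.coe_toNNReal _ (by positivity)]

lemma coordVar_gaussIx_ne_zero (hS : ∀ l ∈ S, 1 ≤ l) (hC : ∀ l ∈ S, 0 < C l)
    (j : Σ l : S, mrange l) : coordVar C (gaussIx hS j) ≠ 0 := by
  have hC0 := hC j.1 j.1.2
  rw [← NNReal.coe_ne_zero, coe_coordVar_gaussIx hS hC]
  split_ifs <;> positivity

lemma Chat_div_eq_blockMeanSq (hS : ∀ l ∈ S, 1 ≤ l) (hC : ∀ l ∈ S, 0 < C l) (u : S)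
    (x : (Σ l : S, mrange l) → ℝ) :
    Chat (modelCoeff S) u x / C u = blockMeanSq (fun j => coordVar C (gaussIx hS j)) u x := by
  simp only [blockMeanSq, Chat_modelCoeff, coe_coordVar_gaussIx hS hC, Fintype.card_coe,
    card_mrange, Nat.cast_add, Nat.cast_mul, Nat.cast_ofNat, Nat.cast_one]
  rw [div_right_comm, Finset.sum_div]
  congr 1
  refine Finset.sum_congr rfl fun m _ => ?_
  rw [div_div_eq_mul_div, mul_comm (x _ ^ 2)]

end Model

namespace CMBModel

variable {Ω : Type*} [MeasurableSpace Ω] {μ : Measure Ω} {C : ℕ → ℝ} {a : ℕ → ℤ → Ω → ℂ}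
  {S : Finset ℕ}

lemma hasLaw_coordFn (h : CMBModel μ C a) (i : GaussIx) :
    HasLaw (coordFn a i) (gaussianReal 0 (coordVar C i)) μ where
  aemeasurable := by
    have : NeZero (μ.map (coordFn a i)) := by rw [h.gauss i]; infer_instance
    exact aemeasurable_of_map_neZero this
  map_eq := h.gauss i

lemma hasLaw_pi_gaussianReal (h : CMBModel μ C a) (hS : ∀ l ∈ S, 1 ≤ l) :
    HasLaw (fun ω j => coordFn a (gaussIx hS j) ω)
      (Measure.pi fun j => gaussianReal 0 (coordVar C (gaussIx hS j))) μ :=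
  (h.indep.precomp (gaussIx_injective hS)).hasLaw_pi fun _ => h.hasLaw_coordFn _

lemma modelCoeff_coordFn (h : CMBModel μ C a) (hS : ∀ l ∈ S, 1 ≤ l) (ω : Ω) (l : ℕ) (hl : l ∈ S)
    (m : ℤ) (hm : m ∈ mrange l) :
    modelCoeff S l m (fun j => coordFn a (gaussIx hS j) ω) = a l m ω := by
  have hneg : -m ∈ mrange l := by rwa [mem_mrange, Int.natAbs_neg, ← mem_mrange]
  have hzero : (0 : ℤ) ∈ mrange l := by simp [mem_mrange]
  rw [modelCoeff, complexCoeff, zeroExtend_of_mem _ hl hm, zeroExtend_of_mem _ hl hneg,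
    zeroExtend_of_mem _ hl hzero]
  split_ifs with h0 hpos
  · subst h0
    exact Complex.ext (by simp [coordFn, gaussIx]) (by simp [h.aZeroReal l (hS l hl) ω])
  · lift m to ℕ using hpos.le
    have hm0 : m ≠ 0 := by simpa using h0
    refine Complex.ext ?_ ?_ <;> simp [coordFn, gaussIx, hm0, Nat.pos_iff_ne_zero]
  · obtain ⟨n, rfl⟩ : ∃ n : ℕ, m = -n := ⟨m.natAbs, by lia⟩
    rw [h.aConj l (hS l hl) n (by lia) (by simpa [mem_mrange] using hm) ω, Int.natAbs_neg,
      Int.natAbs_natCast]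
    congr 1
    refine Complex.ext ?_ ?_ <;> simp [coordFn, gaussIx]
    all_goals lia

end CMBModel

section CorrectionFactor

variable {I : ℕ}

/-- The distinct multipoles `ℓ̄_u` occurring in a family of triples. -/
def multipoles (l : Fin I → ℕ × ℕ × ℕ) : Finset ℕ := (∑ i, tripleMultiset (l i)).toFinset

/-- Half the multiplicity `#(u)` of a multipole, that is, its multiplicity when each triple is
repeated `pᵢ` times. -/
def halfMultiplicity (l : Fin I → ℕ × ℕ × ℕ) (p : Fin I → ℕ) (u : ℕ) : ℕ :=
  (∑ i, p i • tripleMultiset (l i)).count u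

lemma toFinset_sum_nsmul_subset (l : Fin I → ℕ × ℕ × ℕ) (p : Fin I → ℕ) :
    (∑ i, p i • tripleMultiset (l i)).toFinset ⊆ multipoles l := by
  intro u hu
  simp only [multipoles, Multiset.mem_toFinset, Multiset.mem_sum] at hu ⊢
  obtain ⟨i, hi, hu⟩ := hu
  exact ⟨i, hi, Multiset.mem_of_mem_nsmul hu⟩

lemma forall_mem_multipoles {l : Fin I → ℕ × ℕ × ℕ} {P : ℕ → Prop} :
    (∀ u ∈ multipoles l, P u) ↔ ∀ i, P (l i).1 ∧ P (l i).2.1 ∧ P (l i).2.2 := by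
  simp only [multipoles, tripleMultiset, Multiset.mem_toFinset, Multiset.mem_sum,
    Finset.mem_univ, true_and, Multiset.insert_eq_cons, Multiset.mem_cons,
    Multiset.mem_singleton, forall_exists_index]
  rw [forall_comm]
  simp only [forall_eq_or_imp, forall_eq]

lemma count_two_mul_smul (l : Fin I → ℕ × ℕ × ℕ) (p : Fin I → ℕ) (u : ℕ) :
    (∑ i, (2 * p i) • tripleMultiset (l i)).count u / 2 = halfMultiplicity l p u := by
  simp only [mul_smul, ← Finset.smul_sum, Multiset.count_nsmul, halfMultiplicity,
    Nat.mul_div_cancel_left _ two_pos]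

lemma prod_multipoles_pow {R : Type*} [CommMonoid R] (r : ℕ → R) (l : Fin I → ℕ × ℕ × ℕ)
    (p : Fin I → ℕ) :
    ∏ u ∈ multipoles l, r u ^ halfMultiplicity l p u =
      ∏ i, (r (l i).1 * r (l i).2.1 * r (l i).2.2) ^ p i := by
  calc ∏ u ∈ multipoles l, r u ^ halfMultiplicity l p u
      = ((∑ i, p i • tripleMultiset (l i)).map r).prod := by
        rw [Finset.prod_multiset_map_count]
        refine (Finset.prod_subset (toFinset_sum_nsmul_subset l p) fun u _ hu => ?_).symm
        rw [halfMultiplicity, Multiset.count_eq_zero.2 (by simpa using hu), pow_zero]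
    _ = ∏ i, (r (l i).1 * r (l i).2.1 * r (l i).2.2) ^ p i := by
        rw [← Multiset.coe_mapAddMonoidHom, map_sum, Multiset.prod_sum]
        simp [Multiset.map_nsmul, Multiset.prod_nsmul, tripleMultiset, mul_assoc]

lemma Gfactor_eq_prod (l : Fin I → ℕ × ℕ × ℕ) (p : Fin I → ℕ) :
    Gfactor l p = ∏ u ∈ multipoles l, gfun u (halfMultiplicity l p u) := by
  simp only [Gfactor, count_two_mul_smul]
  refine Finset.prod_subset (toFinset_sum_nsmul_subset l _) fun u _ hu => ?_
  rw [← count_two_mul_smul, Multiset.count_eq_zero.2 (by simpa using hu), Nat.zero_div, gfun,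
    Finset.Icc_eq_empty (by simp), Finset.prod_empty]

lemma gfun_mul_gammaMoment (l k : ℕ) : gfun l k * gammaMoment ((2 * l + 1) / 2) k = 1 := by
  induction k with
  | zero => simp [gfun, gammaMoment]
  | succ k ih =>
    have hstep : (2 * (l : ℝ) + 1) / (2 * l + 2 * (k + 1 : ℕ) - 1) *
        (1 + k / ((2 * l + 1) / 2)) = 1 := by
      have hden : 2 * (l : ℝ) + 2 * (k + 1 : ℕ) - 1 = 2 * l + 1 + 2 * k := by push_cast; ring
      rw [hden]
      field_simp
    rw [gfun, gammaMoment, Finset.prod_Icc_succ_top k.succ_pos, Finset.prod_range_succ,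
      mul_mul_mul_comm, hstep, mul_one]
    exact ih

lemma Gfactor_mul_prod_gammaMoment (l : Fin I → ℕ × ℕ × ℕ) (p : Fin I → ℕ) :
    Gfactor l p * ∏ u : multipoles l,
      gammaMoment (Fintype.card (mrange u) / 2) (halfMultiplicity l p u) = 1 := by
  simp only [Gfactor_eq_prod, Fintype.card_coe, card_mrange, Nat.cast_add, Nat.cast_mul,
    Nat.cast_ofNat, Nat.cast_one]
  rw [Finset.prod_coe_sort (multipoles l)
    fun u => gammaMoment ((2 * u + 1) / 2) (halfMultiplicity l p u), ← Finset.prod_mul_distrib]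
  exact Finset.prod_eq_one fun u _ => gfun_mul_gammaMoment u _

end CorrectionFactor

section MomentTransfer

variable {C : ℕ → ℝ} {I : ℕ} {l : Fin I → ℕ × ℕ × ℕ}

lemma ae_prod_Ibis_eq (hS : ∀ u ∈ multipoles l, 1 ≤ u) (hC : ∀ u ∈ multipoles l, 0 < C u)
    (p : Fin I → ℕ) :
    ∀ᵐ x ∂Measure.pi fun j => gaussianReal 0 (coordVar C (gaussIx hS j)),
      ∏ i, Ibis C (modelCoeff (multipoles l)) (l i).1 (l i).2.1 (l i).2.2 x ^ (2 * p i) =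
        (∏ i, Ihat (modelCoeff (multipoles l)) (l i).1 (l i).2.1 (l i).2.2 x ^ (2 * p i)) *
          ∏ u, blockMeanSq (fun j => coordVar C (gaussIx hS j)) u x ^
            halfMultiplicity l p u := by
  have hpos := ae_all_iff.2 fun u =>
    ae_blockMeanSq_pos (fun j => coordVar_gaussIx_ne_zero hS hC j) u
  filter_upwards [hpos] with x hx
  have hChat (u : ℕ) (hu : u ∈ multipoles l) : 0 < Chat (modelCoeff (multipoles l)) u x := by
    have hdiv := Chat_div_eq_blockMeanSq hS hC ⟨u, hu⟩ x ▸ hx ⟨u, hu⟩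
    exact (div_pos_iff_of_pos_right (hC u hu)).1 hdiv
  simp only [← Chat_div_eq_blockMeanSq hS hC]
  rw [Finset.prod_coe_sort (multipoles l)
      fun u => (Chat (modelCoeff (multipoles l)) u x / C u) ^ halfMultiplicity l p u,
    prod_multipoles_pow fun u => Chat (modelCoeff (multipoles l)) u x / C u,
    ← Finset.prod_mul_distrib]
  refine Finset.prod_congr rfl fun i _ => ?_
  obtain ⟨hC₁, hC₂, hC₃⟩ := forall_mem_multipoles.1 hC i
  obtain ⟨h₁, h₂, h₃⟩ := forall_mem_multipoles.1 hChat i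
  rw [pow_mul, pow_mul, ← mul_pow, Ibis_sq hC₁ hC₂ hC₃ h₁ h₂ h₃]

lemma integral_prod_Ibis_modelCoeff (hS : ∀ u ∈ multipoles l, 1 ≤ u)
    (hC : ∀ u ∈ multipoles l, 0 < C u) (p : Fin I → ℕ) :
    ∫ x, ∏ i, Ibis C (modelCoeff (multipoles l)) (l i).1 (l i).2.1 (l i).2.2 x ^ (2 * p i)
        ∂Measure.pi (fun j => gaussianReal 0 (coordVar C (gaussIx hS j))) =
      (∏ u : multipoles l,
          gammaMoment (Fintype.card (mrange u) / 2) (halfMultiplicity l p u)) *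
        ∫ x, ∏ i, Ihat (modelCoeff (multipoles l)) (l i).1 (l i).2.1 (l i).2.2 x ^ (2 * p i)
          ∂Measure.pi (fun j => gaussianReal 0 (coordVar C (gaussIx hS j))) := by
  have hIhat := measurable_Ihat (measurable_modelCoeff (multipoles l))
  rw [integral_congr_ae (ae_prod_Ibis_eq hS hC p)]
  refine integral_mul_prod_blockMeanSq_pow (coordVar_gaussIx_ne_zero hS hC)
    (Finset.measurable_prod _ fun i _ => (hIhat _ _ _).pow_const _)
    (fun x => Finset.prod_nonneg fun i _ => (even_two_mul (p i)).pow_nonneg _)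
    (fun u c hc x => ?_) _
  simp only [Ihat_modelCoeff_blockScale u hc]

namespace CMBModel

variable {Ω : Type*} [MeasurableSpace Ω] {μ : Measure Ω} {a : ℕ → ℤ → Ω → ℂ}

lemma integral_prod_Ihat (h : CMBModel μ C a) (hS : ∀ u ∈ multipoles l, 1 ≤ u)
    (p : Fin I → ℕ) :
    ∫ ω, ∏ i, Ihat a (l i).1 (l i).2.1 (l i).2.2 ω ^ (2 * p i) ∂μ =
      ∫ x, ∏ i, Ihat (modelCoeff (multipoles l)) (l i).1 (l i).2.1 (l i).2.2 x ^ (2 * p i)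
        ∂Measure.pi fun j => gaussianReal 0 (coordVar C (gaussIx hS j)) := by
  have hIhat := measurable_Ihat (measurable_modelCoeff (multipoles l))
  rw [← (h.hasLaw_pi_gaussianReal hS).integral_comp (by fun_prop)]
  refine integral_congr_ae (.of_forall fun ω => Finset.prod_congr rfl fun i _ => ?_)
  obtain ⟨h₁, h₂, h₃⟩ := forall_mem_multipoles.1 (h.modelCoeff_coordFn hS ω) i
  rw [← Ihat_congr h₁ h₂ h₃]

lemma integral_prod_Ibis (h : CMBModel μ C a) (hS : ∀ u ∈ multipoles l, 1 ≤ u)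
    (p : Fin I → ℕ) :
    ∫ ω, ∏ i, Ibis C a (l i).1 (l i).2.1 (l i).2.2 ω ^ (2 * p i) ∂μ =
      ∫ x, ∏ i, Ibis C (modelCoeff (multipoles l)) (l i).1 (l i).2.1 (l i).2.2 x ^ (2 * p i)
        ∂Measure.pi fun j => gaussianReal 0 (coordVar C (gaussIx hS j)) := by
  have hIbis := measurable_Ibis C (measurable_modelCoeff (multipoles l))
  rw [← (h.hasLaw_pi_gaussianReal hS).integral_comp (by fun_prop)]
  refine integral_congr_ae (.of_forall fun ω => Finset.prod_congr rfl fun i _ => ?_)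
  obtain ⟨h₁, h₂, h₃⟩ := forall_mem_multipoles.1 (h.modelCoeff_coordFn hS ω) i
  rw [← Ibis_congr C h₁ h₂ h₃]

end CMBModel

theorem moment_transfer_general {Ω : Type*} [MeasurableSpace Ω] {μ : Measure Ω}
    {a : ℕ → ℤ → Ω → ℂ} (hmod : CMBModel μ C a)
    (hl : ∀ i, 1 ≤ (l i).1 ∧ 1 ≤ (l i).2.1 ∧ 1 ≤ (l i).2.2) (p : Fin I → ℕ) :
    ∫ ω, ∏ i, Ihat a (l i).1 (l i).2.1 (l i).2.2 ω ^ (2 * p i) ∂μ =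
      (∫ ω, ∏ i, Ibis C a (l i).1 (l i).2.1 (l i).2.2 ω ^ (2 * p i) ∂μ) * Gfactor l p := by
  have hS : ∀ u ∈ multipoles l, 1 ≤ u := forall_mem_multipoles.2 hl
  rw [hmod.integral_prod_Ihat hS, hmod.integral_prod_Ibis hS,
    integral_prod_Ibis_modelCoeff hS (fun u hu => hmod.cPos u (hS u hu)), mul_comm, ← mul_assoc,
    Gfactor_mul_prod_gammaMoment, one_mul]

end MomentTransfer

/-- **Moment transfer identity** (equation (formest)): for ordered triples of positive
multipoles with even sums,
`E[∏ᵢ Î_{l_{i1}l_{i2}l_{i3}}^{2pᵢ}] = E[∏ᵢ I_{l_{i1}l_{i2}l_{i3}}^{2pᵢ}] · G[…]`. -/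
theorem moment_transfer (Ω : Type) (_ : MeasurableSpace Ω) (μ : Measure Ω)
    [IsProbabilityMeasure μ] (C : ℕ → ℝ) (a : ℕ → ℤ → Ω → ℂ) (hmod : CMBModel μ C a)
    (I : ℕ) (l : Fin I → ℕ × ℕ × ℕ) (p : Fin I → ℕ) (hp : ∀ i, 1 ≤ p i)
    (hord : ∀ i, 1 ≤ (l i).1 ∧ (l i).1 ≤ (l i).2.1 ∧ (l i).2.1 ≤ (l i).2.2 ∧
      Even ((l i).1 + (l i).2.1 + (l i).2.2)) :
    (∫ ω, ∏ i, (Ihat a (l i).1 (l i).2.1 (l i).2.2 ω) ^ (2 * p i) ∂μ) =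
      (∫ ω, ∏ i, (Ibis C a (l i).1 (l i).2.1 (l i).2.2 ω) ^ (2 * p i) ∂μ) *
        Gfactor l p :=
  moment_transfer_general hmod
    (fun i => ⟨(hord i).1, (hord i).1.trans (hord i).2.1,
      ((hord i).1.trans (hord i).2.1).trans (hord i).2.2.1⟩) p

end
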